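/- (Lemma 3.2.) Fix T > 0. For all positive constants c₋ ≤ c₊ and χ₋ ≤ χ₊ there exist positive constants C₋, C₊ and ε₀ such that the following holds for all ε ∈ (0,ε₀]: let β = β(ε) ≥ 0 with β → 0 as ε → 0, let ã : [−T,T] → ℝ be continuous with −c₊(β ∨ t²) ≤ ã(t) ≤ −c₋(β ∨ t²) for all |t| ≤ T, let χ₀ ∈ [χ₋, χ₊], and set α̃(t,s) = ∫_s^t ã(u) du. Then the function F(t) := χ₀ e^{α̃(t,−T)/ε} + ε⁻¹∫_{−T}^t e^{α̃(t,s)/ε} ds satisfies C₋/(β ∨ ε^{2/3}) ≤ F(t) ≤ C₊/(β ∨ ε^{2/3}) for |t| ≤ √β ∨ ε^{1/3}, and C₋/t² ≤ F(t) ≤ C₊/t² for √β ∨ ε^{1/3} ≤ |t| ≤ T. -/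

import Mathlib

open MeasureTheory Real Set

namespace BerglundGentz

noncomputable section

/-- Partial derivative of the drift `f` with respect to the space variable. -/
def dxf (f : ℝ → ℝ → ℝ) (x t : ℝ) : ℝ := deriv (fun y => f y t) x

/-- Second partial derivative of the drift `f` with respect to the space variable. -/
def dxxf (f : ℝ → ℝ → ℝ) (x t : ℝ) : ℝ := iteratedDeriv 2 (fun y => f y t) x

/-- Hypotheses on the symmetric class of double-well drifts `f`, with equilibrium
branches `0` and `± xs`, minimal barrier parameter `a₀`, and comparison constants
`cm ≤ cp` (all `≍` bounds are encoded through `cm`, `cp`). -/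
structure SymClass (d T a₁ cm cp ε a₀ : ℝ) (f : ℝ → ℝ → ℝ) (xs : ℝ → ℝ) : Prop where
  hd : 0 < d
  hT : 0 < T
  hT' : T < 1 / 2
  hε : 0 < ε
  ha₀ : 0 ≤ a₀
  ha₁ : 0 < a₁
  hcm : 0 < cm
  hcmcp : cm ≤ cp
  smooth : ContDiffOn ℝ 4 (fun p : ℝ × ℝ => f p.1 p.2) (Icc (-d) d ×ˢ univ)
  periodic : ∀ x t, f x (t + 1) = f x t
  odd : ∀ x t, f (-x) t = -f x t
  xs_cont : Continuous xs
  xs_pos : ∀ t, 0 < xs t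
  xs_le_d : ∀ t, xs t ≤ d
  zeros : ∀ x t, |x| ≤ d → (f x t = 0 ↔ x = 0 ∨ x = xs t ∨ x = -xs t)
  stab0 : ∀ t, 0 < dxf f 0 t
  stabstar : ∀ t, dxf f (xs t) t < 0
  pitchfork : iteratedDeriv 3 (fun y => f y 0) 0 < 0
  a_taylor : ∀ t, |t| ≤ T → |dxf f 0 t - (a₀ + a₁ * t ^ 2)| ≤ cp * |t| ^ 3
  xs_asymp : ∀ t, |t| ≤ T →
    cm * max (Real.sqrt a₀) |t| ≤ xs t ∧ xs t ≤ cp * max (Real.sqrt a₀) |t|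
  xs_mid : ∀ t, T ≤ t → t ≤ 1 - T → cm ≤ xs t ∧ xs t ≤ cp
  a_asymp : ∀ t, |t| ≤ T →
    cm * max a₀ (t ^ 2) ≤ dxf f 0 t ∧ dxf f 0 t ≤ cp * max a₀ (t ^ 2)
  a_mid : ∀ t, T ≤ t → t ≤ 1 - T → cm ≤ dxf f 0 t ∧ dxf f 0 t ≤ cp
  astar_asymp : ∀ t, cm * dxf f 0 t ≤ -dxf f (xs t) t ∧ -dxf f (xs t) t ≤ cp * dxf f 0 t

/-- Hypotheses on the asymmetric class of double-well drifts `f`, with stable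
equilibrium branches `xm < xp`, unstable branch `x0`, avoided saddle-node
bifurcation near `(xc, 0)`, and comparison constants `cm ≤ cp`. -/
structure AsymClass (d T a₁ cm cp ε a₀ xc : ℝ) (f : ℝ → ℝ → ℝ)
    (xm x0 xp : ℝ → ℝ) : Prop where
  hd : 0 < d
  hT : 0 < T
  hT' : T < 1 / 2
  hε : 0 < ε
  ha₀ : 0 ≤ a₀
  ha₁ : 0 < a₁
  hcm : 0 < cm
  hcmcp : cm ≤ cp
  smooth : ContDiffOn ℝ 3 (fun p : ℝ × ℝ => f p.1 p.2) (Icc (-d) d ×ˢ univ)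
  periodic : ∀ x t, f x (t + 1) = f x t
  xm_cont : Continuous xm
  x0_cont : Continuous x0
  xp_cont : Continuous xp
  order : ∀ t, xm t < x0 t ∧ x0 t < xp t
  range : ∀ t, xm t ∈ Icc (-d) d ∧ x0 t ∈ Icc (-d) d ∧ xp t ∈ Icc (-d) d
  zeros : ∀ x t, |x| ≤ d → (f x t = 0 ↔ x = xm t ∨ x = x0 t ∨ x = xp t)
  isolated : ∀ δ > (0:ℝ), ∃ ρ > (0:ℝ), ∀ x t, |x| ≤ d →
    δ ≤ |x - xm t| → δ ≤ |x - x0 t| → δ ≤ |x - xp t| → ρ ≤ |f x t|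
  stab_p : ∀ t, dxf f (xp t) t < 0
  stab_m : ∀ t, dxf f (xm t) t < 0
  stab_0 : ∀ t, 0 < dxf f (x0 t) t
  hxc : |xc| < d
  fold : dxxf f xc 0 < 0
  dxf_small : ∀ t, |t| ≤ T → |dxf f xc t| ≤ cp * t ^ 2
  f_taylor : ∀ t, |t| ≤ T → |f xc t - (a₀ + a₁ * t ^ 2)| ≤ cp * |t| ^ 3
  xp_asymp : ∀ t, |t| ≤ T → cm * max (Real.sqrt a₀) |t| ≤ xp t - xc ∧
    xp t - xc ≤ cp * max (Real.sqrt a₀) |t|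
  x0_asymp : ∀ t, |t| ≤ T → cm * max (Real.sqrt a₀) |t| ≤ xc - x0 t ∧
    xc - x0 t ≤ cp * max (Real.sqrt a₀) |t|
  ap_asymp : ∀ t, |t| ≤ T → cm * max (Real.sqrt a₀) |t| ≤ -dxf f (xp t) t ∧
    -dxf f (xp t) t ≤ cp * max (Real.sqrt a₀) |t|
  a0_asymp : ∀ t, |t| ≤ T → cm * max (Real.sqrt a₀) |t| ≤ dxf f (x0 t) t ∧
    dxf f (x0 t) t ≤ cp * max (Real.sqrt a₀) |t|
  xm_asymp : ∀ t, |t| ≤ T → cm ≤ xc - xm t ∧ xc - xm t ≤ cp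
  am_asymp : ∀ t, |t| ≤ T → cm ≤ -dxf f (xm t) t ∧ -dxf f (xm t) t ≤ cp
  /-- an analogous avoided saddle-node bifurcation, with opposite signs, occurs at
  some `(xc', tc)` with `tc ∈ (T, 1-T)`, and branches and linearizations stay
  bounded away from zero between the two close encounters. -/
  second_bif : ∃ xc' tc a₁' : ℝ, T < tc ∧ tc < 1 - T ∧ |xc'| ≤ d ∧
    cm ≤ a₁' ∧ a₁' ≤ cp ∧ 0 < dxxf f xc' tc ∧
    (∀ t, |t| ≤ T → |dxf f xc' (tc + t)| ≤ cp * t ^ 2 ∧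
      |f xc' (tc + t) + (a₀ + a₁' * t ^ 2)| ≤ cp * |t| ^ 3) ∧
    (∀ t, (T ≤ t ∧ t ≤ tc - T) ∨ (tc + T ≤ t ∧ t ≤ 1 - T) →
      cm ≤ xp t - x0 t ∧ cm ≤ x0 t - xm t ∧
      cm ≤ -dxf f (xp t) t ∧ cm ≤ -dxf f (xm t) t ∧ cm ≤ dxf f (x0 t) t)

/-- `xdet` solves the slow ODE `ε ẋ = f(x,t)` on `[-T,T]` and starts at time `-T`
at distance `≍ ε` above the branch `xs`. -/
structure IsDetSol (ε T cm cp : ℝ) (f : ℝ → ℝ → ℝ) (xs xdet : ℝ → ℝ) : Prop where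
  ode : ∀ t ∈ Icc (-T) T, HasDerivAt xdet (f (xdet t) t / ε) t
  init_lo : cm * ε ≤ xdet (-T) - xs (-T)
  init_hi : xdet (-T) - xs (-T) ≤ cp * ε

/-- The linearization of `f` along the deterministic solution. -/
def abar (f : ℝ → ℝ → ℝ) (xdet : ℝ → ℝ) (t : ℝ) : ℝ := dxf f (xdet t) t

/-- `ᾱ(t,s) = ∫_s^t ā(u) du`. -/
def albar (f : ℝ → ℝ → ℝ) (xdet : ℝ → ℝ) (t s : ℝ) : ℝ := ∫ u in s..t, abar f xdet u

/-- The function `ζ(t)` governing the variance of the linearized process. -/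
def zeta (ε T : ℝ) (f : ℝ → ℝ → ℝ) (xdet : ℝ → ℝ) (t : ℝ) : ℝ :=
  Real.exp (2 * albar f xdet t (-T) / ε) / (2 * |abar f xdet (-T)|)
    + ε⁻¹ * ∫ s in (-T)..t, Real.exp (2 * albar f xdet t s / ε)

/-- `α(t,s) = ∫_s^t a(u) du` where `a(u) = ∂ₓf(0,u)`. -/
def alphaInt (f : ℝ → ℝ → ℝ) (t s : ℝ) : ℝ := ∫ u in s..t, dxf f 0 u

/-- `α̂(t,s) = ∫_s^t ∂ₓf(x̂det_u, u) du` along a solution `xhat`. -/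
def alphaHat (f : ℝ → ℝ → ℝ) (xhat : ℝ → ℝ) (t s : ℝ) : ℝ := ∫ u in s..t, dxf f (xhat u) u

/-- `W` is a standard Brownian motion on `(Ω, ℙ)`. -/
structure IsBM {Ω : Type} [MeasurableSpace Ω] (ℙ : Measure Ω) (W : ℝ → Ω → ℝ) : Prop where
  meas : ∀ t, Measurable (W t)
  cont : ∀ᵐ ω ∂ℙ, Continuous fun t => W t ω
  gauss : ∀ s t : ℝ, s ≤ t →
    ℙ.map (fun ω => W t ω - W s ω) = ProbabilityTheory.gaussianReal 0 (Real.toNNReal (t - s))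
  indep : ∀ s t u v : ℝ, s ≤ t → t ≤ u → u ≤ v →
    ProbabilityTheory.IndepFun (fun ω => W t ω - W s ω) (fun ω => W v ω - W u ω) ℙ

/-- `X` is the pathwise solution, driven by `W`, of
`dx = ε⁻¹ f(x,t) dt + σ ε^{-1/2} dW` with `X_{t₀} = x₀`. -/
structure IsSol {Ω : Type} [MeasurableSpace Ω] (ℙ : Measure Ω) (ε σ : ℝ)
    (f : ℝ → ℝ → ℝ) (W : ℝ → Ω → ℝ) (t₀ x₀ : ℝ) (X : ℝ → Ω → ℝ) : Prop where
  meas : ∀ t, Measurable (X t)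
  sol : ∀ᵐ ω ∂ℙ, Continuous (fun t => X t ω) ∧ ∀ t, t₀ ≤ t →
    X t ω = x₀ + ε⁻¹ * (∫ s in t₀..t, f (X s ω) s)
      + σ / Real.sqrt ε * (W t ω - W t₀ ω)

/-- `Y` is the pathwise solution, driven by `W`, of the linear SDE
`dy = ε⁻¹ ã(t) y dt + σ ε^{-1/2} dW` with `Y_{t₀} = y₀`. -/
structure IsLinSol {Ω : Type} [MeasurableSpace Ω] (ℙ : Measure Ω) (ε σ : ℝ)
    (atil : ℝ → ℝ) (W : ℝ → Ω → ℝ) (t₀ y₀ : ℝ) (Y : ℝ → Ω → ℝ) : Prop where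
  meas : ∀ t, Measurable (Y t)
  sol : ∀ᵐ ω ∂ℙ, Continuous (fun t => Y t ω) ∧ ∀ t, t₀ ≤ t →
    Y t ω = y₀ + ε⁻¹ * (∫ s in t₀..t, atil s * Y s ω)
      + σ / Real.sqrt ε * (W t ω - W t₀ ω)

/-- The slow-fast scalar quantity of Lemmas 3.2/4.1:
`F(t) = χ₀ e^{α̃(t,-T)/ε} + ε⁻¹ ∫_{-T}^t e^{α̃(t,s)/ε} ds`. -/
def Ffun (ε T : ℝ) (atil : ℝ → ℝ) (χ₀ t : ℝ) : ℝ :=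
  χ₀ * Real.exp ((∫ u in (-T)..t, atil u) / ε)
    + ε⁻¹ * ∫ s in (-T)..t, Real.exp ((∫ u in s..t, atil u) / ε)

end

/-!
With `h = ε^{1/3}`, both regimes say that `F(t)` is comparable to `1 / M`, where
`M = β ∨ h² ∨ t²`. The memory of the kernel `e^{α̃(t,s)/ε}` is of length `ε / M`.

* Upper bound: `∫_s^t (β ∨ u²) du ≥ M (t - s) / 4 - h³ / 6` for all `s ≤ t`, so the kernel is at
  most a constant times an exponential of rate `c₋ M / (4ε)`, which integrates to `O(ε / M)`.
* Lower bound: as `ε / M ≤ h`, on `[t - ε / M, t]` one has `β ∨ u² ≤ 4M`, so the kernel is at least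
  `e^{-4c₊}` there. If this window sticks out of `[-T, t]`, then `M ≥ T² / 4` and the initial term
  alone is large enough.
-/

/-- The scale `β ∨ h² ∨ t²` to whose inverse `F(t)` is comparable; the parameter `h` stands for
`ε^{1/3}`, which keeps real powers out of the estimates. -/
def localRate (β h t : ℝ) : ℝ := max (max β (h ^ 2)) (t ^ 2)

section LocalRate

variable {β h s t u : ℝ}

lemma le_localRate : β ≤ localRate β h t :=
  (le_max_left _ _).trans (le_max_left _ _)

lemma sq_left_le_localRate : h ^ 2 ≤ localRate β h t :=
  (le_max_right _ _).trans (le_max_left _ _)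

lemma sq_right_le_localRate : t ^ 2 ≤ localRate β h t :=
  le_max_right _ _

lemma localRate_pos (hh : 0 < h) : 0 < localRate β h t :=
  (pow_pos hh 2).trans_le sq_left_le_localRate

lemma localRate_le_localRate {β' h' t' : ℝ} (hβ : β ≤ β') (hh : 0 ≤ h) (hhh : h ≤ h')
    (ht : |t| ≤ t') : localRate β h t ≤ localRate β' h' t' :=
  max_le_max (max_le_max hβ (pow_le_pow_left₀ hh hhh 2))
    (sq_le_sq' (neg_le_of_abs_le ht) (le_of_abs_le ht))

lemma max_sqrt_sq (hβ : 0 ≤ β) (hh : 0 ≤ h) : max √β h ^ 2 = max β (h ^ 2) := by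
  rw [(pow_left_monotoneOn (n := 2)).map_max (sqrt_nonneg β) hh, sq_sqrt hβ]

lemma localRate_of_abs_le (hβ : 0 ≤ β) (hh : 0 ≤ h) (ht : |t| ≤ max √β h) :
    localRate β h t = max β (h ^ 2) := by
  refine max_eq_left ?_
  rw [← max_sqrt_sq hβ hh, ← sq_abs t]
  exact pow_le_pow_left₀ (abs_nonneg t) ht 2

lemma localRate_of_le_abs (hβ : 0 ≤ β) (hh : 0 ≤ h) (ht : max √β h ≤ |t|) :
    localRate β h t = t ^ 2 := by
  refine max_eq_right ?_
  rw [← max_sqrt_sq hβ hh, ← sq_abs t]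
  exact pow_le_pow_left₀ (le_max_of_le_right hh) ht 2

lemma cube_div_localRate_le (hh : 0 < h) : h ^ 3 / localRate β h t ≤ h := by
  rw [div_le_iff₀ (localRate_pos hh)]
  calc h ^ 3 = h * h ^ 2 := by ring
    _ ≤ h * localRate β h t := by gcongr; exact sq_left_le_localRate

lemma max_sq_le_four_mul_localRate (hu : |t - u| ≤ h) :
    max β (u ^ 2) ≤ 4 * localRate β h t := by
  have hMt : t ^ 2 ≤ localRate β h t := sq_right_le_localRate
  have hMβ : β ≤ localRate β h t := le_localRate
  have hMu : (t - u) ^ 2 ≤ localRate β h t :=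
    (sq_le_sq' (neg_le_of_abs_le hu) (le_of_abs_le hu)).trans sq_left_le_localRate
  have hu_sq : u ^ 2 ≤ 2 * t ^ 2 + 2 * (t - u) ^ 2 := by linarith [sq_nonneg (2 * t - u)]
  exact max_le (by linarith [sq_nonneg t]) (by linarith)

lemma three_quarters_mul_sq_mul_sub_le_cube_sub_cube (hst : s ≤ t) :
    3 / 4 * t ^ 2 * (t - s) ≤ t ^ 3 - s ^ 3 := by
  linarith [mul_nonneg (sub_nonneg.2 hst) (sq_nonneg (t / 2 + s))]

lemma three_quarters_mul_sq_mul_sub_sub_le_cube_sub_cube (hh : 0 ≤ h) (hst : s ≤ t) :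
    3 / 4 * h ^ 2 * (t - s) - h ^ 3 / 2 ≤ t ^ 3 - s ^ 3 := by
  have hts : 0 ≤ t - s := sub_nonneg.2 hst
  calc 3 / 4 * h ^ 2 * (t - s) - h ^ 3 / 2
      ≤ (t - s) ^ 3 / 4 := by
        linarith [mul_nonneg (by linarith : 0 ≤ t - s + 2 * h) (sq_nonneg (t - s - h))]
    _ ≤ t ^ 3 - s ^ 3 := by linarith [mul_nonneg hts (sq_nonneg (t + s))]

lemma mul_sub_le_integral_max_sq (hst : s ≤ t) : β * (t - s) ≤ ∫ u in s..t, max β (u ^ 2) := by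
  calc β * (t - s) = ∫ _ in s..t, β := by simp [mul_comm]
    _ ≤ ∫ u in s..t, max β (u ^ 2) :=
      intervalIntegral.integral_mono hst (by simp)
        (Continuous.intervalIntegrable (by fun_prop) _ _) fun _ ↦ le_max_left _ _

lemma cube_sub_cube_div_three_le_integral_max_sq (hst : s ≤ t) :
    (t ^ 3 - s ^ 3) / 3 ≤ ∫ u in s..t, max β (u ^ 2) := by
  calc (t ^ 3 - s ^ 3) / 3 = ∫ u in s..t, u ^ 2 := by rw [integral_pow]; norm_num
    _ ≤ ∫ u in s..t, max β (u ^ 2) :=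
      intervalIntegral.integral_mono hst (by simp)
        (Continuous.intervalIntegrable (by fun_prop) _ _) fun _ ↦ le_max_right _ _

lemma localRate_mul_sub_le_integral_max_sq (hh : 0 ≤ h) (hst : s ≤ t) :
    localRate β h t * (t - s) / 4 - h ^ 3 / 6 ≤ ∫ u in s..t, max β (u ^ 2) := by
  have hβ_le := mul_sub_le_integral_max_sq (β := β) hst
  have hcube_le := cube_sub_cube_div_three_le_integral_max_sq (β := β) hst
  have hh3 : 0 ≤ h ^ 3 := pow_nonneg hh 3
  have hbound_β : β * (t - s) ≤ 4 * (∫ u in s..t, max β (u ^ 2)) + 2 / 3 * h ^ 3 := by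
    have hnonneg : 0 ≤ ∫ u in s..t, max β (u ^ 2) :=
      intervalIntegral.integral_nonneg hst fun u _ ↦ le_max_of_le_right (sq_nonneg u)
    linarith
  have hbound_h : h ^ 2 * (t - s) ≤ 4 * (∫ u in s..t, max β (u ^ 2)) + 2 / 3 * h ^ 3 := by
    linarith [three_quarters_mul_sq_mul_sub_sub_le_cube_sub_cube hh hst]
  have hbound_t : t ^ 2 * (t - s) ≤ 4 * (∫ u in s..t, max β (u ^ 2)) + 2 / 3 * h ^ 3 := by
    linarith [three_quarters_mul_sq_mul_sub_le_cube_sub_cube hst]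
  have hbound : localRate β h t * (t - s) ≤ 4 * (∫ u in s..t, max β (u ^ 2)) + 2 / 3 * h ^ 3 := by
    have hts : 0 ≤ t - s := sub_nonneg.2 hst
    rw [localRate, max_mul_of_nonneg _ _ hts, max_mul_of_nonneg _ _ hts]
    exact max_le (max_le hbound_β hbound_h) hbound_t
  linarith

end LocalRate

lemma integral_exp_sub_mul_sub_le {b k : ℝ} (hk : 0 < k) (r t : ℝ) :
    ∫ s in r..t, exp (b - k * (t - s)) ≤ exp b / k := by
  have hantideriv (s : ℝ) :
      HasDerivAt (fun s ↦ exp (b - k * (t - s)) / k) (exp (b - k * (t - s))) s := by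
    have hlinear : HasDerivAt (fun s ↦ b - k * (t - s)) k s := by
      simpa using (((hasDerivAt_id s).const_sub t).const_mul k).const_sub b
    simpa [hk.ne'] using hlinear.exp.div_const k
  rw [intervalIntegral.integral_eq_sub_of_hasDerivAt (fun s _ ↦ hantideriv s)
    (Continuous.intervalIntegrable (by fun_prop) _ _), sub_self, mul_zero, sub_zero]
  exact sub_le_self _ (by positivity)

section Drift

variable {ε T β h b c κ δ r s t χ₀ : ℝ} {a : ℝ → ℝ}

lemma intervalIntegrable_exp_integral_div (ha : IntervalIntegrable a volume r t) :
    IntervalIntegrable (fun s ↦ exp ((∫ u in s..t, a u) / ε)) volume r t := by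
  have hprimitive : ContinuousOn (fun s ↦ ∫ u in s..t, a u) (uIcc r t) :=
    (intervalIntegral.continuousOn_primitive_interval' ha right_mem_uIcc).neg.congr
      fun s _ ↦ intervalIntegral.integral_symm t s
  exact (hprimitive.div_const ε).rexp.intervalIntegrable

lemma intervalIntegrable_of_mem_Icc (ha : IntervalIntegrable a volume r t) (hs : s ∈ Icc r t) :
    IntervalIntegrable a volume s t :=
  ha.mono_set (uIcc_subset_uIcc_right (Icc_subset_uIcc hs))

lemma Ffun_le_of_integral_le (hε : 0 < ε) (hκ : 0 < κ) (hχ₀ : 0 ≤ χ₀) (ht : -T ≤ t)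
    (ha : IntervalIntegrable a volume (-T) t)
    (hdecay : ∀ s ∈ Icc (-T) t, ∫ u in s..t, a u ≤ b * ε - κ * (t - s)) :
    Ffun ε T a χ₀ t ≤ exp b * (χ₀ + κ⁻¹) := by
  have hkernel : ∀ s ∈ Icc (-T) t,
      exp ((∫ u in s..t, a u) / ε) ≤ exp (b - κ / ε * (t - s)) := by
    intro s hs
    rw [exp_le_exp, div_le_iff₀ hε]
    exact (hdecay s hs).trans_eq (by field_simp)
  have hinitial : exp ((∫ u in (-T)..t, a u) / ε) ≤ exp b := by
    refine (hkernel (-T) (left_mem_Icc.2 ht)).trans (exp_le_exp.2 (sub_le_self _ ?_))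
    exact mul_nonneg (by positivity) (sub_nonneg.2 ht)
  have hintegral : ∫ s in (-T)..t, exp ((∫ u in s..t, a u) / ε) ≤ exp b / (κ / ε) :=
    (intervalIntegral.integral_mono_on ht (intervalIntegrable_exp_integral_div ha)
      (Continuous.intervalIntegrable (by fun_prop) _ _) hkernel).trans
      (integral_exp_sub_mul_sub_le (by positivity) _ _)
  calc Ffun ε T a χ₀ t ≤ χ₀ * exp b + ε⁻¹ * (exp b / (κ / ε)) := by unfold Ffun; gcongr
    _ = exp b * (χ₀ + κ⁻¹) := by field_simp

lemma mul_exp_neg_le_Ffun (hε : 0 < ε) (hχ₀ : 0 ≤ χ₀) (ht : -T ≤ t)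
    (hslow : -(b * ε) ≤ ∫ u in (-T)..t, a u) : χ₀ * exp (-b) ≤ Ffun ε T a χ₀ t := by
  have hintegral : 0 ≤ ∫ s in (-T)..t, exp ((∫ u in s..t, a u) / ε) :=
    intervalIntegral.integral_nonneg ht fun _ _ ↦ (exp_pos _).le
  have hinitial : exp (-b) ≤ exp ((∫ u in (-T)..t, a u) / ε) := by
    rwa [exp_le_exp, le_div_iff₀ hε, neg_mul]
  calc χ₀ * exp (-b) ≤ χ₀ * exp ((∫ u in (-T)..t, a u) / ε) := by gcongr
    _ ≤ Ffun ε T a χ₀ t := le_add_of_nonneg_right (by positivity)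

lemma inv_mul_exp_neg_le_Ffun (hε : 0 < ε) (hχ₀ : 0 ≤ χ₀) (hδ : 0 ≤ δ) (ht : -T ≤ t - δ)
    (ha : IntervalIntegrable a volume (-T) t)
    (hslow : ∀ s ∈ Icc (t - δ) t, -(b * ε) ≤ ∫ u in s..t, a u) :
    ε⁻¹ * (δ * exp (-b)) ≤ Ffun ε T a χ₀ t := by
  have hδt : t - δ ≤ t := sub_le_self t hδ
  have hkernel : ∀ s ∈ Icc (t - δ) t, exp (-b) ≤ exp ((∫ u in s..t, a u) / ε) := by
    intro s hs
    rw [exp_le_exp, le_div_iff₀ hε, neg_mul]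
    exact hslow s hs
  have hintegrable := intervalIntegrable_exp_integral_div (ε := ε) ha
  have hwindow : δ * exp (-b) ≤ ∫ s in (-T)..t, exp ((∫ u in s..t, a u) / ε) := by
    calc δ * exp (-b) = ∫ _ in (t - δ)..t, exp (-b) := by simp
      _ ≤ ∫ s in (t - δ)..t, exp ((∫ u in s..t, a u) / ε) :=
        intervalIntegral.integral_mono_on hδt (by simp)
          (intervalIntegrable_of_mem_Icc hintegrable ⟨ht, hδt⟩) hkernel
      _ ≤ ∫ s in (-T)..t, exp ((∫ u in s..t, a u) / ε) :=
        intervalIntegral.integral_mono_interval ht hδt le_rfl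
          (ae_of_all _ fun _ ↦ (exp_pos _).le) hintegrable
  calc ε⁻¹ * (δ * exp (-b)) ≤ ε⁻¹ * ∫ s in (-T)..t, exp ((∫ u in s..t, a u) / ε) := by gcongr
    _ ≤ Ffun ε T a χ₀ t := le_add_of_nonneg_left (by positivity)

lemma integral_le_of_le_neg_max_sq (hc : 0 ≤ c) (hh : 0 ≤ h) (hst : s ≤ t)
    (ha : IntervalIntegrable a volume s t) (hle : ∀ u ∈ Icc s t, a u ≤ -(c * max β (u ^ 2))) :
    ∫ u in s..t, a u ≤ c / 6 * h ^ 3 - c / 4 * localRate β h t * (t - s) := by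
  calc ∫ u in s..t, a u ≤ ∫ u in s..t, -(c * max β (u ^ 2)) :=
        intervalIntegral.integral_mono_on hst ha
          (Continuous.intervalIntegrable (by fun_prop) _ _) hle
    _ = -(c * ∫ u in s..t, max β (u ^ 2)) := by simp
    _ ≤ -(c * (localRate β h t * (t - s) / 4 - h ^ 3 / 6)) := by
        gcongr
        exact localRate_mul_sub_le_integral_max_sq hh hst
    _ = c / 6 * h ^ 3 - c / 4 * localRate β h t * (t - s) := by ring

lemma le_integral_of_neg_max_sq_le (hc : 0 ≤ c) (hh : 0 < h) (hst : s ≤ t)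
    (hwindow : t - s ≤ h ^ 3 / localRate β h t)
    (ha : IntervalIntegrable a volume s t) (hle : ∀ u ∈ Icc s t, -(c * max β (u ^ 2)) ≤ a u) :
    -(4 * c * h ^ 3) ≤ ∫ u in s..t, a u := by
  have hrate : ∀ u ∈ Icc s t, -(c * (4 * localRate β h t)) ≤ a u := by
    intro u hu
    have hut : |t - u| ≤ h := by
      rw [abs_of_nonneg (sub_nonneg.2 hu.2)]
      linarith [hu.1, cube_div_localRate_le (β := β) (t := t) hh]
    refine le_trans ?_ (hle u hu)
    gcongr
    exact max_sq_le_four_mul_localRate hut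
  calc -(4 * c * h ^ 3) ≤ -(4 * c * ((t - s) * localRate β h t)) := by
        gcongr
        exact (le_div_iff₀ (localRate_pos hh)).1 hwindow
    _ = ∫ _ in s..t, -(c * (4 * localRate β h t)) := by
        rw [intervalIntegral.integral_const, smul_eq_mul]; ring
    _ ≤ ∫ u in s..t, a u := intervalIntegral.integral_mono_on hst (by simp) ha hrate

theorem Ffun_le_of_le_neg_max_sq (hc : 0 < c) (hh : 0 < h) (hχ₀ : 0 ≤ χ₀) (ht : -T ≤ t)
    (ha : IntervalIntegrable a volume (-T) t)
    (hle : ∀ u ∈ Icc (-T) t, a u ≤ -(c * max β (u ^ 2))) :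
    Ffun (h ^ 3) T a χ₀ t ≤ exp (c / 6) * (χ₀ + (c / 4 * localRate β h t)⁻¹) := by
  have hM : 0 < localRate β h t := localRate_pos hh
  refine Ffun_le_of_integral_le (by positivity) (by positivity) hχ₀ ht ha fun s hs ↦ ?_
  exact integral_le_of_le_neg_max_sq hc.le hh.le hs.2 (intervalIntegrable_of_mem_Icc ha hs)
    fun u hu ↦ hle u ⟨hs.1.trans hu.1, hu.2⟩

lemma sq_div_four_le_localRate (hh : 0 < h) (hT : 0 ≤ T)
    (ht : t - h ^ 3 / localRate β h t ≤ -T) : T ^ 2 / 4 ≤ localRate β h t := by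
  have hδ : h ^ 3 / localRate β h t ≤ h := cube_div_localRate_le hh
  rcases le_total (T / 2) h with hTh | hhT
  · calc T ^ 2 / 4 = (T / 2) ^ 2 := by ring
      _ ≤ h ^ 2 := by gcongr
      _ ≤ localRate β h t := sq_left_le_localRate
  · calc T ^ 2 / 4 = (T / 2) ^ 2 := by ring
      _ ≤ (-t) ^ 2 := pow_le_pow_left₀ (by positivity) (by linarith) 2
      _ = t ^ 2 := neg_sq t
      _ ≤ localRate β h t := sq_right_le_localRate

theorem le_Ffun_of_neg_max_sq_le (hc : 0 ≤ c) (hh : 0 < h) (hT : 0 ≤ T) (hχ₀ : 0 ≤ χ₀)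
    (ht : -T ≤ t) (ha : IntervalIntegrable a volume (-T) t)
    (hle : ∀ u ∈ Icc (-T) t, -(c * max β (u ^ 2)) ≤ a u) :
    exp (-(4 * c)) * min 1 (χ₀ * (T ^ 2 / 4)) / localRate β h t ≤ Ffun (h ^ 3) T a χ₀ t := by
  have hM : 0 < localRate β h t := localRate_pos hh
  have hε : 0 < h ^ 3 := pow_pos hh 3
  have hslow : ∀ s ∈ Icc (-T) t, t - s ≤ h ^ 3 / localRate β h t →
      -(4 * c * h ^ 3) ≤ ∫ u in s..t, a u := fun s hs hwindow ↦
    le_integral_of_neg_max_sq_le hc hh hs.2 hwindow (intervalIntegrable_of_mem_Icc ha hs)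
      fun u hu ↦ hle u ⟨hs.1.trans hu.1, hu.2⟩
  rcases le_total (t - h ^ 3 / localRate β h t) (-T) with hstart | hinside
  · calc exp (-(4 * c)) * min 1 (χ₀ * (T ^ 2 / 4)) / localRate β h t
        ≤ χ₀ * exp (-(4 * c)) := by
          rw [div_le_iff₀ hM, mul_comm χ₀ (exp _), mul_assoc]
          gcongr
          exact (min_le_right _ _).trans (by gcongr; exact sq_div_four_le_localRate hh hT hstart)
      _ ≤ Ffun (h ^ 3) T a χ₀ t :=
          mul_exp_neg_le_Ffun hε hχ₀ ht (hslow (-T) (left_mem_Icc.2 ht) (by linarith))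
  · calc exp (-(4 * c)) * min 1 (χ₀ * (T ^ 2 / 4)) / localRate β h t
        ≤ exp (-(4 * c)) * 1 / localRate β h t := by gcongr; exact min_le_left _ _
      _ = (h ^ 3)⁻¹ * (h ^ 3 / localRate β h t * exp (-(4 * c))) := by field_simp
      _ ≤ Ffun (h ^ 3) T a χ₀ t :=
          inv_mul_exp_neg_le_Ffun hε hχ₀ (by positivity) hinside ha fun s hs ↦
            hslow s ⟨hinside.trans hs.1, hs.2⟩ (by linarith [hs.1])

end Drift

theorem exists_div_localRate_le_Ffun_le_div (T cl cu xl xu K : ℝ) (hT : 0 < T) (hc : 0 < cl)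
    (hcc : cl ≤ cu) (hχ : 0 < xl) (hχχ : xl ≤ xu) (hK : 0 ≤ K) :
    ∃ Cl Cu : ℝ, 0 < Cl ∧ 0 < Cu ∧ ∀ (h β χ₀ t : ℝ) (atil : ℝ → ℝ), 0 < h → -T ≤ t →
      localRate β h t ≤ K → IntervalIntegrable atil volume (-T) t →
      (∀ u ∈ Icc (-T) t, -(cu * max β (u ^ 2)) ≤ atil u ∧ atil u ≤ -(cl * max β (u ^ 2))) →
      xl ≤ χ₀ → χ₀ ≤ xu →
      Cl / localRate β h t ≤ Ffun (h ^ 3) T atil χ₀ t ∧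
        Ffun (h ^ 3) T atil χ₀ t ≤ Cu / localRate β h t := by
  have hxu : 0 < xu := hχ.trans_le hχχ
  refine ⟨exp (-(4 * cu)) * min 1 (xl * (T ^ 2 / 4)), exp (cl / 6) * (xu * K + 4 / cl),
    by positivity, by positivity, ?_⟩
  intro h β χ₀ t atil hh ht hMK ha hpinned hxl hxu'
  have hM : 0 < localRate β h t := localRate_pos hh
  have hχ₀ : 0 ≤ χ₀ := hχ.le.trans hxl
  constructor
  · calc exp (-(4 * cu)) * min 1 (xl * (T ^ 2 / 4)) / localRate β h t
        ≤ exp (-(4 * cu)) * min 1 (χ₀ * (T ^ 2 / 4)) / localRate β h t := by gcongr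
      _ ≤ Ffun (h ^ 3) T atil χ₀ t :=
          le_Ffun_of_neg_max_sq_le (hc.le.trans hcc) hh hT.le hχ₀ ht ha
            fun u hu ↦ (hpinned u hu).1
  · calc Ffun (h ^ 3) T atil χ₀ t
        ≤ exp (cl / 6) * (χ₀ + (cl / 4 * localRate β h t)⁻¹) :=
          Ffun_le_of_le_neg_max_sq hc hh hχ₀ ht ha fun u hu ↦ (hpinned u hu).2
      _ = exp (cl / 6) * (χ₀ * localRate β h t + 4 / cl) / localRate β h t := by field_simp
      _ ≤ exp (cl / 6) * (xu * K + 4 / cl) / localRate β h t := by gcongr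

theorem lemma_slow_fast_quadratic_general (T cl cu xl xu ε₀ : ℝ)
    (hT : 0 < T) (hc : 0 < cl) (hcc : cl ≤ cu) (hχ : 0 < xl) (hχχ : xl ≤ xu) :
    ∃ Cl Cu : ℝ, 0 < Cl ∧ 0 < Cu ∧
      ∀ (ε β χ₀ : ℝ) (atil : ℝ → ℝ),
        0 < ε → ε ≤ ε₀ → 0 ≤ β → β ≤ ε₀ →
        IntervalIntegrable atil volume (-T) T →
        (∀ t, |t| ≤ T → -(cu * max β (t ^ 2)) ≤ atil t ∧ atil t ≤ -(cl * max β (t ^ 2))) →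
        xl ≤ χ₀ → χ₀ ≤ xu →
        ∀ t, |t| ≤ T →
          (|t| ≤ max (Real.sqrt β) (ε ^ ((1:ℝ)/3)) →
            Cl / max β (ε ^ ((2:ℝ)/3)) ≤ Ffun ε T atil χ₀ t ∧
            Ffun ε T atil χ₀ t ≤ Cu / max β (ε ^ ((2:ℝ)/3))) ∧
          (max (Real.sqrt β) (ε ^ ((1:ℝ)/3)) ≤ |t| →
            Cl / t ^ 2 ≤ Ffun ε T atil χ₀ t ∧ Ffun ε T atil χ₀ t ≤ Cu / t ^ 2) := by
  obtain ⟨Cl, Cu, hCl, hCu, hbounds⟩ := exists_div_localRate_le_Ffun_le_div T cl cu xl xu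
    (localRate ε₀ (ε₀ ^ ((1:ℝ)/3)) T) hT hc hcc hχ hχχ ((sq_nonneg T).trans sq_right_le_localRate)
  refine ⟨Cl, Cu, hCl, hCu, fun ε β χ₀ atil hε hεε₀ hβ hβε₀ ha hpinned hxl hxu t ht ↦ ?_⟩
  have ht' : t ∈ Icc (-T) T := abs_le.1 ht
  have hh : 0 < ε ^ ((1:ℝ)/3) := rpow_pos_of_pos hε _
  have hcube : (ε ^ ((1:ℝ)/3)) ^ 3 = ε := by
    rw [← rpow_mul_natCast hε.le]; norm_num
  have hsq : ε ^ ((2:ℝ)/3) = (ε ^ ((1:ℝ)/3)) ^ 2 := by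
    rw [← rpow_mul_natCast hε.le]; norm_num
  have hF := hbounds _ β χ₀ t atil hh ht'.1
    (localRate_le_localRate hβε₀ hh.le (by gcongr) ht)
    (ha.mono_set (uIcc_subset_uIcc_left (Icc_subset_uIcc ht')))
    (fun u hu ↦ hpinned u (abs_le.2 ⟨hu.1, hu.2.trans ht'.2⟩)) hxl hxu
  rw [hcube] at hF
  refine ⟨fun hnear ↦ ?_, fun hfar ↦ ?_⟩
  · rwa [hsq, ← localRate_of_abs_le hβ hh.le hnear]
  · rwa [← localRate_of_le_abs hβ hh.le hfar]

/-- Lemma 3.2: two-sided bounds for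
`F(t) = χ₀ e^{α̃(t,-T)/ε} + ε⁻¹ ∫_{-T}^t e^{α̃(t,s)/ε} ds` when the drift
coefficient `ã` is quadratically pinned, `-cu(β ∨ t²) ≤ ã(t) ≤ -cl(β ∨ t²)`. -/
theorem lemma_slow_fast_quadratic (T cl cu xl xu : ℝ)
    (hT : 0 < T) (hc : 0 < cl) (hcc : cl ≤ cu) (hχ : 0 < xl) (hχχ : xl ≤ xu) :
    ∃ Cl Cu ε₀ : ℝ, 0 < Cl ∧ 0 < Cu ∧ 0 < ε₀ ∧
      ∀ (ε β χ₀ : ℝ) (atil : ℝ → ℝ),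
        0 < ε → ε ≤ ε₀ → 0 ≤ β → β ≤ ε₀ →
        ContinuousOn atil (Icc (-T) T) →
        (∀ t, |t| ≤ T → -(cu * max β (t ^ 2)) ≤ atil t ∧ atil t ≤ -(cl * max β (t ^ 2))) →
        xl ≤ χ₀ → χ₀ ≤ xu →
        ∀ t, |t| ≤ T →
          (|t| ≤ max (Real.sqrt β) (ε ^ ((1:ℝ)/3)) →
            Cl / max β (ε ^ ((2:ℝ)/3)) ≤ Ffun ε T atil χ₀ t ∧
            Ffun ε T atil χ₀ t ≤ Cu / max β (ε ^ ((2:ℝ)/3))) ∧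
          (max (Real.sqrt β) (ε ^ ((1:ℝ)/3)) ≤ |t| →
            Cl / t ^ 2 ≤ Ffun ε T atil χ₀ t ∧ Ffun ε T atil χ₀ t ≤ Cu / t ^ 2) := by
  obtain ⟨Cl, Cu, hCl, hCu, hbounds⟩ :=
    lemma_slow_fast_quadratic_general T cl cu xl xu 1 hT hc hcc hχ hχχ
  exact ⟨Cl, Cu, 1, hCl, hCu, one_pos, fun ε β χ₀ atil hε hε₀ hβ hβ₀ hcont ↦
    hbounds ε β χ₀ atil hε hε₀ hβ hβ₀ (hcont.intervalIntegrable_of_Icc (by linarith))⟩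

end BerglundGentz
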